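/- Let ℏ > 0 and let ψ : ℝ → ℂ be smooth with compact support, and let w(x,p) = (1/(2π)) ∫_ℝ conj(ψ(x + βℏ/2)) ψ(x − βℏ/2) e^{iβp} dβ be Wigner's density. Then w is integrable on ℝ², and for all real α, β (not both zero), its two-dimensional Fourier transform satisfies (1/(2π)) ∫∫_{ℝ²} w(x,p) e^{−i(αx+βp)} dx dp = (e^{iαβℏ/2}/(2π)) ∫_ℝ conj(ψ(y)) e^{−iαy} ψ(y − βℏ) dy. -/

import Mathlib

open MeasureTheory Real

/-!
Up to normalization, `w(x, ·)` is the inverse Fourier transform of the kernel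
`K(x, b) = conj (ψ (x + bℏ/2)) ψ (x - bℏ/2)` in the variable `b`. Differentiating `K` in `b` only
moves derivatives onto the two factors, and `(x, b) ↦ (x + bℏ/2, x - bℏ/2)` is a linear
isomorphism, so `K - ∂²K/∂b²` is integrable over the plane. Its transform is `1 + p²` times that of
`K`, whence `w` is dominated by an integrable function of `x` times `(1 + p²)⁻¹`.

By Fubini the transform of `w` in `p` can be taken first: Fourier inversion turns it into `K(x, β)`,
and the substitution `y = x + βℏ/2` produces the phase `e^{iαβℏ/2}`.
-/

open scoped FourierTransform ComplexConjugate

theorem integrable_comp_injective_linearMap {E F : Type*} [NormedAddCommGroup E] [NormedSpace ℝ E]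
    [FiniteDimensional ℝ E] [MeasurableSpace E] [BorelSpace E] [NormedAddCommGroup F]
    {μ : Measure E} [μ.IsAddHaarMeasure] {f : E → F} (hf : Integrable f μ) {L : E →ₗ[ℝ] E}
    (hL : Function.Injective L) : Integrable (fun x => f (L x)) μ := by
  have hdet : LinearMap.det L ≠ 0 := fun h =>
    (LinearMap.bot_lt_ker_of_det_eq_zero h).ne' (LinearMap.ker_eq_bot.2 hL)
  refine Integrable.comp_measurable ?_ L.continuous_of_finiteDimensional.measurable
  rw [Measure.map_linearMap_addHaar_eq_smul_addHaar μ hdet]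
  exact hf.smul_measure ENNReal.ofReal_ne_top

theorem integrable_mul_exp_I_mul_ofReal {X : Type*} [MeasurableSpace X] {μ : Measure X}
    {f : X → ℂ} (hf : Integrable f μ) {θ : X → ℝ} (hθ : Measurable θ) :
    Integrable (fun x => f x * Complex.exp (Complex.I * θ x)) μ :=
  hf.mul_bdd (c := 1) (by fun_prop) (.of_forall fun x => (Complex.norm_exp_I_mul_ofReal _).le)

/-- The inverse Fourier transform in angular frequency, without prefactor: the kernel is `e^{ibp}`,
whereas that of `𝓕⁻` is `e^{2πibp}`. -/
noncomputable def angularFourierInv (f : ℝ → ℂ) (p : ℝ) : ℂ :=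
  ∫ b : ℝ, f b * Complex.exp (Complex.I * b * p)

section AngularFourierInv

variable {f g : ℝ → ℂ}

theorem angularFourierInv_eq_fourierInv (f : ℝ → ℂ) (p : ℝ) :
    angularFourierInv f p = 𝓕⁻ f (p / (2 * π)) := by
  rw [angularFourierInv, Real.fourierInv_eq']
  congr 1 with b
  rw [smul_eq_mul, mul_comm]
  congr 2
  simp only [RCLike.inner_apply, ringHom_apply, Complex.ofReal_mul, Complex.ofReal_ofNat,
    Complex.ofReal_div]
  field_simp

theorem norm_angularFourierInv_le (f : ℝ → ℂ) (p : ℝ) :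
    ‖angularFourierInv f p‖ ≤ ∫ b : ℝ, ‖f b‖ := by
  refine (norm_integral_le_integral_norm _).trans_eq (integral_congr_ae (.of_forall fun b => ?_))
  simp only [norm_mul, mul_assoc, ← Complex.ofReal_mul, Complex.norm_exp_I_mul_ofReal, mul_one]

theorem angularFourierInv_sub (hf : Integrable f) (hg : Integrable g) (p : ℝ) :
    angularFourierInv (f - g) p = angularFourierInv f p - angularFourierInv g p := by
  have hint {h : ℝ → ℂ} (hh : Integrable h) :
      Integrable fun b : ℝ => h b * Complex.exp (Complex.I * b * p) := by
    simpa [mul_assoc] using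
      integrable_mul_exp_I_mul_ofReal hh (by fun_prop : Measurable fun b : ℝ => b * p)
  simp only [angularFourierInv, Pi.sub_apply, sub_mul]
  exact integral_sub (hint hf) (hint hg)

theorem angularFourierInv_deriv (hf : Integrable f) (hd : Differentiable ℝ f)
    (hf' : Integrable (deriv f)) (p : ℝ) :
    angularFourierInv (deriv f) p = -(Complex.I * p) * angularFourierInv f p := by
  simp only [angularFourierInv_eq_fourierInv, Real.fourierInv_eq_fourier_neg,
    Real.fourier_deriv hf hd hf', smul_eq_mul]
  push_cast
  field_simp

theorem integrable_fourier_of_integrable_angularFourierInv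
    (hF : Integrable (angularFourierInv f)) : Integrable (𝓕 f) := by
  have hscale (ξ : ℝ) : angularFourierInv f (-(2 * π) * ξ) = 𝓕 f ξ := by
    rw [angularFourierInv_eq_fourierInv, Real.fourierInv_eq_fourier_neg]
    field_simp
  simpa only [hscale] using hF.comp_mul_left' (neg_ne_zero.2 two_pi_pos.ne')

theorem integral_angularFourierInv_mul_exp (hc : Continuous f) (hf : Integrable f)
    (hF : Integrable (angularFourierInv f)) (β : ℝ) :
    ∫ p : ℝ, angularFourierInv f p * Complex.exp (-(Complex.I * (β * p))) = 2 * π * f β :=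
  calc
    _ = |2 * π| • ∫ ξ : ℝ, angularFourierInv f (2 * π * ξ) *
          Complex.exp (-(Complex.I * (β * (2 * π * ξ : ℝ)))) := by
      rw [Measure.integral_comp_mul_left (fun p : ℝ =>
        angularFourierInv f p * Complex.exp (-(Complex.I * (β * p)))), smul_smul, abs_inv,
        mul_inv_cancel₀ (by positivity), one_smul]
    _ = 2 * π * 𝓕 (𝓕⁻ f) β := by
      rw [abs_of_pos two_pi_pos, Complex.real_smul, Real.fourier_real_eq_integral_exp_smul]
      push_cast
      congr 2 with ξ
      rw [angularFourierInv_eq_fourierInv, mul_div_cancel_left₀ _ two_pi_pos.ne', smul_eq_mul,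
        mul_comm]
      congr 2
      ring
    _ = 2 * π * f β := by
      rw [hc.fourier_fourierInv_eq hf (integrable_fourier_of_integrable_angularFourierInv hF)]

end AngularFourierInv

/-- Twice differentiable functions that are integrable together with their first two derivatives,
i.e. the twice differentiable functions in the Sobolev space `W^{2,1}(ℝ)`. This regularity makes
Wigner's density integrable, and Schwartz functions have it. -/
structure HasTwoIntegrableDerivs (f : ℝ → ℂ) : Prop where
  differentiable : Differentiable ℝ f
  differentiable_deriv : Differentiable ℝ (deriv f)
  integrable : Integrable f
  integrable_deriv : Integrable (deriv f)
  integrable_deriv_deriv : Integrable (deriv (deriv f))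

namespace HasTwoIntegrableDerivs

theorem of_hasCompactSupport {f : ℝ → ℂ} (hf : ContDiff ℝ 2 f) (hs : HasCompactSupport f) :
    HasTwoIntegrableDerivs f :=
  have hf' : ContDiff ℝ 1 (deriv f) := hf.deriv'
  { differentiable := hf.differentiable two_ne_zero
    differentiable_deriv := hf'.differentiable one_ne_zero
    integrable := hf.continuous.integrable_of_hasCompactSupport hs
    integrable_deriv := hf'.continuous.integrable_of_hasCompactSupport hs.deriv
    integrable_deriv_deriv :=
      (hf'.continuous_deriv le_rfl).integrable_of_hasCompactSupport hs.deriv.deriv }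

theorem one_add_sq_mul_angularFourierInv {f : ℝ → ℂ} (hf : HasTwoIntegrableDerivs f) (p : ℝ) :
    (1 + p ^ 2 : ℂ) * angularFourierInv f p = angularFourierInv (f - deriv (deriv f)) p := by
  rw [angularFourierInv_sub hf.integrable hf.integrable_deriv_deriv,
    angularFourierInv_deriv hf.integrable_deriv hf.differentiable_deriv hf.integrable_deriv_deriv,
    angularFourierInv_deriv hf.integrable hf.differentiable hf.integrable_deriv]
  linear_combination (p ^ 2 * angularFourierInv f p) * Complex.I_sq

theorem norm_angularFourierInv_le {f : ℝ → ℂ} (hf : HasTwoIntegrableDerivs f) (p : ℝ) :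
    ‖angularFourierInv f p‖ ≤ (∫ b : ℝ, ‖f b - deriv (deriv f) b‖) * (1 + p ^ 2)⁻¹ := by
  have hp : 0 < 1 + p ^ 2 := by positivity
  rw [← div_eq_mul_inv, le_div_iff₀' hp]
  calc
    (1 + p ^ 2) * ‖angularFourierInv f p‖ = ‖(1 + p ^ 2 : ℂ) * angularFourierInv f p‖ := by
      rw [norm_mul, ← norm_of_nonneg hp.le, ← Complex.norm_real]
      push_cast
      rfl
    _ = ‖angularFourierInv (f - deriv (deriv f)) p‖ := by
      rw [hf.one_add_sq_mul_angularFourierInv]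
    _ ≤ ∫ b : ℝ, ‖f b - deriv (deriv f) b‖ := _root_.norm_angularFourierInv_le _ p

end HasTwoIntegrableDerivs

theorem integrable_angularFourierInv_slice {F : ℝ → ℝ → ℂ}
    (hslice : ∀ᵐ x, HasTwoIntegrableDerivs (F x))
    (hF : Integrable fun q : ℝ × ℝ => F q.1 q.2)
    (hF'' : Integrable fun q : ℝ × ℝ => deriv (deriv (F q.1)) q.2) :
    Integrable fun q : ℝ × ℝ => angularFourierInv (F q.1) q.2 := by
  have hmeas : AEStronglyMeasurable fun q : ℝ × ℝ => angularFourierInv (F q.1) q.2 := by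
    have hcoord : Measure.QuasiMeasurePreserving fun z : (ℝ × ℝ) × ℝ => (z.1.1, z.2) :=
      QuasiMeasurePreserving.prodMap Measure.quasiMeasurePreserving_fst (.id volume)
    exact ((hF.aestronglyMeasurable.comp_quasiMeasurePreserving hcoord).mul
      (by fun_prop : AEStronglyMeasurable fun z : (ℝ × ℝ) × ℝ =>
        Complex.exp (Complex.I * z.2 * z.1.2))).integral_prod_right'
  refine ((hF.sub hF'').norm.integral_prod_left.mul_prod integrable_inv_one_add_sq).mono' hmeas ?_
  filter_upwards [Measure.quasiMeasurePreserving_fst.ae hslice] with q hq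
  exact hq.norm_angularFourierInv_le q.2

/-- The function of `b` whose inverse Fourier transform is the cross-Wigner distribution of `φ` and
`ψ` at position `x`. Keeping the two functions apart makes the class of kernels stable under
differentiation in `b`. -/
noncomputable def crossWignerKernel (ℏ : ℝ) (φ ψ : ℝ → ℂ) (x b : ℝ) : ℂ :=
  conj (φ (x + b * ℏ / 2)) * ψ (x - b * ℏ / 2)

/-- The cross-Wigner distribution of `φ` and `ψ`, the sesquilinear form in `(φ, ψ)` which for
`φ = ψ` is Wigner's density. -/
noncomputable def crossWigner (ℏ : ℝ) (φ ψ : ℝ → ℂ) (x p : ℝ) : ℂ :=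
  1 / (2 * π) * angularFourierInv (crossWignerKernel ℏ φ ψ x) p

section CrossWigner

variable {ℏ : ℝ} {φ ψ : ℝ → ℂ}

theorem continuous_crossWignerKernel (hφ : Continuous φ) (hψ : Continuous ψ) (x : ℝ) :
    Continuous (crossWignerKernel ℏ φ ψ x) := by
  unfold crossWignerKernel
  fun_prop

theorem integrable_crossWignerKernel (hℏ : ℏ ≠ 0) (hφ : Integrable φ) (hψ : Integrable ψ) :
    Integrable fun q : ℝ × ℝ => crossWignerKernel ℏ φ ψ q.1 q.2 := by
  let L : ℝ × ℝ →ₗ[ℝ] ℝ × ℝ :=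
    (LinearMap.fst ℝ ℝ ℝ + (ℏ / 2) • LinearMap.snd ℝ ℝ ℝ).prod
      (LinearMap.fst ℝ ℝ ℝ - (ℏ / 2) • LinearMap.snd ℝ ℝ ℝ)
  have hL (q : ℝ × ℝ) : L q = (q.1 + q.2 * ℏ / 2, q.1 - q.2 * ℏ / 2) := by
    simp only [L, LinearMap.prod_apply, Function.prod_apply, LinearMap.add_apply,
      LinearMap.sub_apply, LinearMap.smul_apply, LinearMap.fst_apply, LinearMap.snd_apply,
      smul_eq_mul]
    ring_nf
  have hinj : Function.Injective L := by
    intro q r h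
    simp only [hL, Prod.mk.injEq] at h
    ext
    · linarith
    · exact mul_right_cancel₀ hℏ (by linarith)
  have hconj : Integrable fun u => conj (φ u) := Complex.conjCLE.integrable_comp_iff.2 hφ
  have hcomp : Integrable fun q : ℝ × ℝ => conj (φ (L q).1) * ψ (L q).2 :=
    integrable_comp_injective_linearMap (hconj.mul_prod hψ) hinj
  simpa only [hL] using! hcomp

theorem hasDerivAt_crossWignerKernel (hφ : Differentiable ℝ φ) (hψ : Differentiable ℝ ψ)
    (x b : ℝ) :
    HasDerivAt (crossWignerKernel ℏ φ ψ x)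
      (ℏ / 2 * (crossWignerKernel ℏ (deriv φ) ψ x b - crossWignerKernel ℏ φ (deriv ψ) x b)) b := by
  have hlin : HasDerivAt (fun b : ℝ => b * ℏ / 2) (ℏ / 2) b := by
    simpa using ((hasDerivAt_id b).mul_const ℏ).div_const 2
  have hφ' := ((hφ _).hasDerivAt.scomp b (hlin.const_add x)).star
  have hψ' := (hψ _).hasDerivAt.scomp b (hlin.const_sub x)
  convert! hφ'.mul hψ' using 1
  simp only [crossWignerKernel, Complex.real_smul, Complex.ofReal_div, Complex.ofReal_ofNat,
    star_mul', star_div₀, RCLike.star_def, Complex.conj_ofReal, star_ofNat, Function.comp_apply,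
    neg_smul, mul_neg]
  ring

theorem deriv_crossWignerKernel (hφ : Differentiable ℝ φ) (hψ : Differentiable ℝ ψ) (x : ℝ) :
    deriv (crossWignerKernel ℏ φ ψ x) = fun b =>
      ℏ / 2 * (crossWignerKernel ℏ (deriv φ) ψ x b - crossWignerKernel ℏ φ (deriv ψ) x b) :=
  funext fun b => (hasDerivAt_crossWignerKernel hφ hψ x b).deriv

theorem hasDerivAt_deriv_crossWignerKernel (hφ : Differentiable ℝ φ)
    (hφ' : Differentiable ℝ (deriv φ)) (hψ : Differentiable ℝ ψ) (hψ' : Differentiable ℝ (deriv ψ))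
    (x b : ℝ) :
    HasDerivAt (deriv (crossWignerKernel ℏ φ ψ x))
      ((ℏ / 2) ^ 2 * (crossWignerKernel ℏ (deriv (deriv φ)) ψ x b -
        2 * crossWignerKernel ℏ (deriv φ) (deriv ψ) x b +
        crossWignerKernel ℏ φ (deriv (deriv ψ)) x b)) b := by
  rw [deriv_crossWignerKernel hφ hψ]
  convert! ((hasDerivAt_crossWignerKernel hφ' hψ x b).sub
    (hasDerivAt_crossWignerKernel hφ hψ' x b)).const_mul (ℏ / 2 : ℂ) using 1
  ring

theorem integrable_deriv_crossWignerKernel (hℏ : ℏ ≠ 0) (hφ : HasTwoIntegrableDerivs φ)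
    (hψ : HasTwoIntegrableDerivs ψ) :
    Integrable fun q : ℝ × ℝ => deriv (crossWignerKernel ℏ φ ψ q.1) q.2 := by
  simp only [deriv_crossWignerKernel hφ.differentiable hψ.differentiable]
  exact ((integrable_crossWignerKernel hℏ hφ.integrable_deriv hψ.integrable).sub
    (integrable_crossWignerKernel hℏ hφ.integrable hψ.integrable_deriv)).const_mul _

theorem integrable_deriv_deriv_crossWignerKernel (hℏ : ℏ ≠ 0) (hφ : HasTwoIntegrableDerivs φ)
    (hψ : HasTwoIntegrableDerivs ψ) :
    Integrable fun q : ℝ × ℝ => deriv (deriv (crossWignerKernel ℏ φ ψ q.1)) q.2 := by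
  simp only [fun x b => (hasDerivAt_deriv_crossWignerKernel (ℏ := ℏ) hφ.differentiable
    hφ.differentiable_deriv hψ.differentiable hψ.differentiable_deriv x b).deriv]
  exact (((integrable_crossWignerKernel hℏ hφ.integrable_deriv_deriv hψ.integrable).sub
    ((integrable_crossWignerKernel hℏ hφ.integrable_deriv hψ.integrable_deriv).const_mul 2)).add
    (integrable_crossWignerKernel hℏ hφ.integrable hψ.integrable_deriv_deriv)).const_mul _

theorem ae_hasTwoIntegrableDerivs_crossWignerKernel (hℏ : ℏ ≠ 0) (hφ : HasTwoIntegrableDerivs φ)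
    (hψ : HasTwoIntegrableDerivs ψ) :
    ∀ᵐ x, HasTwoIntegrableDerivs (crossWignerKernel ℏ φ ψ x) := by
  filter_upwards [
    (integrable_crossWignerKernel hℏ hφ.integrable hψ.integrable).prod_right_ae,
    (integrable_deriv_crossWignerKernel hℏ hφ hψ).prod_right_ae,
    (integrable_deriv_deriv_crossWignerKernel hℏ hφ hψ).prod_right_ae] with x hint hint' hint''
  exact
    { differentiable := fun b =>
        (hasDerivAt_crossWignerKernel hφ.differentiable hψ.differentiable x b).differentiableAt
      differentiable_deriv := fun b =>
        (hasDerivAt_deriv_crossWignerKernel hφ.differentiable hφ.differentiable_deriv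
          hψ.differentiable hψ.differentiable_deriv x b).differentiableAt
      integrable := hint
      integrable_deriv := hint'
      integrable_deriv_deriv := hint'' }

theorem integrable_crossWigner (hℏ : ℏ ≠ 0) (hφ : HasTwoIntegrableDerivs φ)
    (hψ : HasTwoIntegrableDerivs ψ) :
    Integrable fun q : ℝ × ℝ => crossWigner ℏ φ ψ q.1 q.2 :=
  (integrable_angularFourierInv_slice (ae_hasTwoIntegrableDerivs_crossWignerKernel hℏ hφ hψ)
    (integrable_crossWignerKernel hℏ hφ.integrable hψ.integrable)
    (integrable_deriv_deriv_crossWignerKernel hℏ hφ hψ)).const_mul _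

theorem integral_crossWigner_mul_exp_momentum {x : ℝ} (hφ : Continuous φ) (hψ : Continuous ψ)
    (hK : Integrable (crossWignerKernel ℏ φ ψ x)) (hW : Integrable (crossWigner ℏ φ ψ x))
    (β : ℝ) :
    ∫ p : ℝ, crossWigner ℏ φ ψ x p * Complex.exp (-(Complex.I * (β * p))) =
      crossWignerKernel ℏ φ ψ x β := by
  have hF : Integrable (angularFourierInv (crossWignerKernel ℏ φ ψ x)) :=
    (integrable_const_mul_iff (by simp [pi_ne_zero]) _).1 hW
  simp only [crossWigner, mul_assoc]
  rw [integral_const_mul,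
    integral_angularFourierInv_mul_exp (continuous_crossWignerKernel hφ hψ x) hK hF]
  field_simp

theorem integral_crossWignerKernel_mul_exp (ℏ : ℝ) (φ ψ : ℝ → ℂ) (α β : ℝ) :
    ∫ x : ℝ, crossWignerKernel ℏ φ ψ x β * Complex.exp (-(Complex.I * α * x)) =
      Complex.exp (Complex.I * α * β * ℏ / 2) *
        ∫ y : ℝ, conj (φ y) * Complex.exp (-(Complex.I * α * y)) * ψ (y - β * ℏ) := by
  rw [← integral_sub_right_eq_self _ (β * ℏ / 2), ← integral_const_mul]
  congr 1 with y
  have hphase : Complex.exp (-(Complex.I * α * (y - β * ℏ / 2 : ℝ))) =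
      Complex.exp (Complex.I * α * β * ℏ / 2) * Complex.exp (-(Complex.I * α * y)) := by
    rw [← Complex.exp_add]
    congr 1
    push_cast
    ring
  rw [crossWignerKernel, hphase, sub_add_cancel, sub_sub, add_halves]
  ring

theorem integral_crossWigner_mul_exp (hℏ : ℏ ≠ 0) (hφ : Continuous φ) (hφ_int : Integrable φ)
    (hψ : Continuous ψ) (hψ_int : Integrable ψ)
    (hW : Integrable fun q : ℝ × ℝ => crossWigner ℏ φ ψ q.1 q.2) (α β : ℝ) :
    ∫ q : ℝ × ℝ, crossWigner ℏ φ ψ q.1 q.2 *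
        Complex.exp (-(Complex.I * (α * q.1 + β * q.2))) =
      Complex.exp (Complex.I * α * β * ℏ / 2) *
        ∫ y : ℝ, conj (φ y) * Complex.exp (-(Complex.I * α * y)) * ψ (y - β * ℏ) := by
  have hint : Integrable fun q : ℝ × ℝ => crossWigner ℏ φ ψ q.1 q.2 *
      Complex.exp (-(Complex.I * (α * q.1 + β * q.2))) := by
    simpa [-neg_add_rev] using integrable_mul_exp_I_mul_ofReal hW
      (by fun_prop : Measurable fun q : ℝ × ℝ => -(α * q.1 + β * q.2))
  rw [Measure.volume_eq_prod, integral_prod _ hint, ← integral_crossWignerKernel_mul_exp]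
  refine integral_congr_ae ?_
  filter_upwards [(integrable_crossWignerKernel hℏ hφ_int hψ_int).prod_right_ae,
    hW.prod_right_ae] with x hKx hWx
  rw [← integral_crossWigner_mul_exp_momentum hφ hψ hKx hWx, ← integral_mul_const]
  congr 1 with p
  rw [mul_assoc, ← Complex.exp_add]
  congr 2
  ring

theorem wigner_fourier_transform_general (hℏ : ℏ ≠ 0) (hφ : HasTwoIntegrableDerivs φ)
    (hψ : HasTwoIntegrableDerivs ψ) :
    Integrable (fun q : ℝ × ℝ => crossWigner ℏ φ ψ q.1 q.2) ∧
    ∀ α β : ℝ,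
      (1 / (2 * (π : ℂ))) *
          ∫ q : ℝ × ℝ, crossWigner ℏ φ ψ q.1 q.2 *
            Complex.exp (-(Complex.I * (α * q.1 + β * q.2))) =
      (Complex.exp (Complex.I * α * β * ℏ / 2) / (2 * (π : ℂ))) *
          ∫ y : ℝ, conj (φ y) * Complex.exp (-(Complex.I * α * y)) * ψ (y - β * ℏ) := by
  have hW := integrable_crossWigner hℏ hφ hψ
  refine ⟨hW, fun α β => ?_⟩
  rw [integral_crossWigner_mul_exp hℏ hφ.differentiable.continuous hφ.integrable
    hψ.differentiable.continuous hψ.integrable hW]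
  ring

end CrossWigner

/-- The two-dimensional Fourier transform of Wigner's density:
ŵ(α,β) = (e^{iαβℏ/2}/(2π)) ∫ conj(ψ(y)) e^{−iαy} ψ(y−βℏ) dy. -/
theorem wigner_fourier_transform (ℏ : ℝ) (hℏ : 0 < ℏ) (ψ : ℝ → ℂ)
    (hsmooth : ContDiff ℝ (⊤ : ℕ∞) ψ) (hsupp : HasCompactSupport ψ)
    (w : ℝ → ℝ → ℂ)
    (hw : ∀ x p : ℝ, w x p = (1 / (2 * (π : ℂ))) *
      ∫ β : ℝ, (starRingEnd ℂ) (ψ (x + β * ℏ / 2)) * ψ (x - β * ℏ / 2) *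
        Complex.exp (Complex.I * β * p)) :
    Integrable (fun q : ℝ × ℝ => w q.1 q.2) ∧
    ∀ α β : ℝ, (α ≠ 0 ∨ β ≠ 0) →
      (1 / (2 * (π : ℂ))) *
          ∫ q : ℝ × ℝ, w q.1 q.2 * Complex.exp (-(Complex.I * (α * q.1 + β * q.2))) =
      (Complex.exp (Complex.I * α * β * ℏ / 2) / (2 * (π : ℂ))) *
          ∫ y : ℝ, (starRingEnd ℂ) (ψ y) * Complex.exp (-(Complex.I * α * y)) *
            ψ (y - β * ℏ) := by
  obtain rfl : w = crossWigner ℏ ψ ψ := funext₂ hw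
  have hψ := HasTwoIntegrableDerivs.of_hasCompactSupport (contDiff_infty.1 hsmooth 2) hsupp
  exact (wigner_fourier_transform_general hℏ.ne' hψ hψ).imp_right fun h α β _ => h α β
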